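/- arXiv:1009.1762 — 5 statements merged into one kernel-verified Lean document; each statement's English description precedes it below -/
import Mathlib

section
/- Assume the improper integral ∫₀^∞ h(s) ds converges and equals 1/2, and set q(x) = μ ∫_x^∞ h(s) ds, so that M(x) = 1/2 − μ∫₀^x h(s)ds = (1−μ)/2 + q(x). Let r_ξ = S_ξ^{−1} q (with q restricted to (0,ξ)). Then S_ξ^{−1} 1 = (1/(1−μ)) [1 − r_ξ(x) − r_ξ(ξ−x)] in L²(0,ξ). -/
/-!
Let `R` be the reflection `(R f)(x) = f(ξ - x)` on `L²(0, ξ)`. Since `h` is even, the kernel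
`h(x - t)` is unchanged under `(x, t) ↦ (ξ - x, ξ - t)`, so `R` commutes with `S_ξ` and hence with
`S_ξ⁻¹`. Splitting `∫₀^ξ h(x - t) dt = ∫₀^x h + ∫₀^{ξ-x} h` and completing both integrals to `∞`
gives `S_ξ 1 = (1 - μ) + q + R q`. Applying `S_ξ⁻¹` yields `1 = (1 - μ) S_ξ⁻¹ 1 + r_ξ + R r_ξ`.
-/

open MeasureTheory Complex Set Filter
open scoped ComplexInnerProductSpace

noncomputable section

open scoped ENNReal Topology

section IntegralsOverTheLine

variable {E : Type*} [NormedAddCommGroup E]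

theorem continuous_integral_exp_smul [NormedSpace ℂ E] {ν : Measure ℝ} {g : ℝ → E}
    (hg : Integrable g ν) : Continuous fun x : ℝ => ∫ l, exp (I * x * l) • g l ∂ν := by
  have h_fourier : Continuous
      (VectorFourier.fourierIntegral Real.probChar ν (-LinearMap.mul ℝ ℝ) g) :=
    VectorFourier.fourierIntegral_continuous Real.continuous_probChar
      (continuous_fst.mul continuous_snd).neg hg
  convert h_fourier using 2 with x
  rw [VectorFourier.fourierIntegral_probChar]
  congr! 3 with l
  simp only [LinearMap.neg_apply, LinearMap.mul_apply', ofReal_neg, ofReal_mul]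
  ring_nf

theorem even_integral_exp_smul [NormedSpace ℂ E] {ν : Measure ℝ} [ν.IsNegInvariant] {g : ℝ → E}
    (hg : g.Even) : Function.Even fun x : ℝ => ∫ l, exp (I * x * l) • g l ∂ν := by
  intro x
  dsimp only
  rw [← integral_neg_eq_self]
  simp only [ofReal_neg, mul_neg, neg_mul, neg_neg, hg _]

variable [NormedSpace ℝ E] {f : ℝ → E}

theorem intervalIntegral_eq_sub_of_tendsto (hf : ∀ a b, IntervalIntegrable f volume a b)
    {l : Filter ℝ} [l.NeBot] {a b : ℝ} {A B : E}
    (ha : Tendsto (fun T => ∫ s in a..T, f s) l (𝓝 A))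
    (hb : Tendsto (fun T => ∫ s in b..T, f s) l (𝓝 B)) :
    ∫ s in a..b, f s = A - B := by
  have h_sub := ha.sub hb
  simp only [intervalIntegral.integral_interval_sub_interval_comm (hf _ _) (hf _ _) (hf _ _),
    intervalIntegral.integral_same, sub_zero] at h_sub
  exact tendsto_nhds_unique tendsto_const_nhds h_sub

theorem intervalIntegral_comp_const_sub_of_even (hf_even : f.Even)
    (hf : ∀ a b, IntervalIntegrable f volume a b) (ξ x : ℝ) :
    ∫ t in 0..ξ, f (x - t) = (∫ s in 0..x, f s) + ∫ s in 0..ξ - x, f s := by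
  have h_neg : ∫ s in x - ξ..0, f s = ∫ s in 0..ξ - x, f s := by
    simpa only [hf_even _, neg_zero, neg_sub] using
      (intervalIntegral.integral_comp_neg (a := 0) (b := ξ - x) f).symm
  rw [intervalIntegral.integral_comp_sub_left, sub_zero,
    ← intervalIntegral.integral_add_adjacent_intervals (hf (x - ξ) 0) (hf 0 x), h_neg, add_comm]

end IntegralsOverTheLine

section Reflection

theorem measurePreserving_const_sub_Ioo (ξ : ℝ) :
    MeasurePreserving (fun x : ℝ => ξ - x)
      (volume.restrict (Ioo 0 ξ)) (volume.restrict (Ioo 0 ξ)) := by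
  simpa only [preimage_const_sub_Ioo, sub_self, sub_zero] using
    (Measure.measurePreserving_sub_left volume ξ).restrict_preimage
      (measurableSet_Ioo (a := (0 : ℝ)) (b := ξ))

theorem setIntegral_Ioo_const_sub {E : Type*} [NormedAddCommGroup E] [NormedSpace ℝ E]
    (ξ : ℝ) (g : ℝ → E) : ∫ t in Ioo 0 ξ, g (ξ - t) = ∫ t in Ioo 0 ξ, g t :=
  (measurePreserving_const_sub_Ioo ξ).integral_comp
    (Homeomorph.subLeft ξ).measurableEmbedding g

variable {E : Type*} [NormedAddCommGroup E] {p : ℝ≥0∞} {ξ : ℝ}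

/-- The reflection `(R f)(x) = f(ξ - x)` of `L^p(0, ξ)`. -/
def reflectionLp : Lp E p (volume.restrict (Ioo 0 ξ)) →+ Lp E p (volume.restrict (Ioo 0 ξ)) :=
  Lp.compMeasurePreserving (fun x => ξ - x) (measurePreserving_const_sub_Ioo ξ)

theorem coeFn_reflectionLp (f : Lp E p (volume.restrict (Ioo 0 ξ))) :
    reflectionLp f =ᵐ[volume.restrict (Ioo 0 ξ)] fun x => f (ξ - x) :=
  Lp.coeFn_compMeasurePreserving f (measurePreserving_const_sub_Ioo ξ)

theorem ae_const_sub_of_ae_Ioo {P : ℝ → Prop} (hP : ∀ᵐ x ∂volume.restrict (Ioo 0 ξ), P x) :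
    ∀ᵐ x ∂volume.restrict (Ioo 0 ξ), P (ξ - x) :=
  (measurePreserving_const_sub_Ioo ξ).quasiMeasurePreserving.ae hP

end Reflection

section TruncatedWienerHopf

variable {𝕜 : Type*} [RCLike 𝕜] {p : ℝ≥0∞} {h : ℝ → 𝕜} {μ : 𝕜} {ξ : ℝ}

/-- `S` is the truncated Wiener–Hopf operator `(S f)(x) = f(x) - μ ∫₀^ξ h(x - t) f(t) dt` on
`L^p(0, ξ)`, given as a predicate because its boundedness on `L^p(0, ξ)` is not proved here. -/
def IsTruncatedWienerHopf (h : ℝ → 𝕜) (μ : 𝕜) (ξ : ℝ)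
    (S : Lp 𝕜 p (volume.restrict (Ioo 0 ξ)) → Lp 𝕜 p (volume.restrict (Ioo 0 ξ))) : Prop :=
  ∀ f, S f =ᵐ[volume.restrict (Ioo 0 ξ)]
    fun x => f x - μ * ∫ t in Ioo 0 ξ, h (x - t) * f t

namespace IsTruncatedWienerHopf

theorem map_reflectionLp
    {S : Lp 𝕜 p (volume.restrict (Ioo 0 ξ)) → Lp 𝕜 p (volume.restrict (Ioo 0 ξ))}
    (hS : IsTruncatedWienerHopf h μ ξ S) (h_even : h.Even)
    (f : Lp 𝕜 p (volume.restrict (Ioo 0 ξ))) :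
    S (reflectionLp f) = reflectionLp (S f) := by
  have h_kernel (x : ℝ) : ∫ t in Ioo 0 ξ, h (x - t) * reflectionLp f t =
      ∫ t in Ioo 0 ξ, h (ξ - x - t) * f t := by
    rw [← setIntegral_Ioo_const_sub ξ fun t => h (ξ - x - t) * f t]
    apply integral_congr_ae
    filter_upwards [coeFn_reflectionLp f] with t ht
    rw [ht, sub_sub_sub_cancel_left, ← neg_sub x t, h_even]
  apply Lp.ext
  filter_upwards [hS (reflectionLp f), coeFn_reflectionLp f, coeFn_reflectionLp (S f),
    ae_const_sub_of_ae_Ioo (hS f)] with x hSRf hRf hRSf hSf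
  rw [hSRf, hRf, hRSf, hSf, h_kernel]

theorem symm_reflectionLp [Fact (1 ≤ p)]
    {S : Lp 𝕜 p (volume.restrict (Ioo 0 ξ)) ≃L[𝕜] Lp 𝕜 p (volume.restrict (Ioo 0 ξ))}
    (hS : IsTruncatedWienerHopf h μ ξ S) (h_even : h.Even)
    (f : Lp 𝕜 p (volume.restrict (Ioo 0 ξ))) :
    S.symm (reflectionLp f) = reflectionLp (S.symm f) := by
  rw [S.symm_apply_eq, hS.map_reflectionLp h_even, S.apply_symm_apply]

theorem map_one_eq
    {S : Lp 𝕜 p (volume.restrict (Ioo 0 ξ)) → Lp 𝕜 p (volume.restrict (Ioo 0 ξ))}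
    (hS : IsTruncatedWienerHopf h μ ξ S) (h_even : h.Even)
    (h_int : ∀ a b, IntervalIntegrable h volume a b) (hξ : 0 ≤ ξ) {J : ℝ → 𝕜}
    (hJ : ∀ x, Tendsto (fun T => ∫ s in x..T, h s) atTop (𝓝 (J x)))
    {one q : Lp 𝕜 p (volume.restrict (Ioo 0 ξ))}
    (hone : one =ᵐ[volume.restrict (Ioo 0 ξ)] fun _ => 1)
    (hq : q =ᵐ[volume.restrict (Ioo 0 ξ)] fun x => μ * J x) :
    S one = (1 - 2 * μ * J 0) • one + q + reflectionLp q := by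
  have h_kernel (x : ℝ) :
      ∫ t in Ioo 0 ξ, h (x - t) * one t = (J 0 - J x) + (J 0 - J (ξ - x)) := calc
    _ = ∫ t in Ioo 0 ξ, h (x - t) :=
      integral_congr_ae (by filter_upwards [hone] with t ht using by rw [ht, mul_one])
    _ = ∫ t in 0..ξ, h (x - t) := by
      rw [intervalIntegral.integral_of_le hξ, integral_Ioc_eq_integral_Ioo]
    _ = (∫ s in 0..x, h s) + ∫ s in 0..ξ - x, h s :=
      intervalIntegral_comp_const_sub_of_even h_even h_int ξ x
    _ = _ := by
      rw [intervalIntegral_eq_sub_of_tendsto h_int (hJ 0) (hJ x),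
        intervalIntegral_eq_sub_of_tendsto h_int (hJ 0) (hJ (ξ - x))]
  apply Lp.ext
  filter_upwards [hS one, hone, hq, coeFn_reflectionLp q, ae_const_sub_of_ae_Ioo hq,
    Lp.coeFn_add ((1 - 2 * μ * J 0) • one + q) (reflectionLp q),
    Lp.coeFn_add ((1 - 2 * μ * J 0) • one) q, Lp.coeFn_smul (1 - 2 * μ * J 0) one]
    with x hSone hone_x hq_x hRq hq_refl h_add h_add' h_smul
  rw [hSone, h_kernel, h_add, Pi.add_apply, h_add', Pi.add_apply, h_smul, Pi.smul_apply,
    smul_eq_mul, hRq, hone_x, hq_x, hq_refl]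
  ring

end IsTruncatedWienerHopf

theorem statement4_general [Fact (1 ≤ p)] (h_even : h.Even)
    (h_int : ∀ a b, IntervalIntegrable h volume a b) {J : ℝ → 𝕜}
    (hJ : ∀ x, Tendsto (fun T => ∫ s in x..T, h s) atTop (𝓝 (J x)))
    (hμ : 2 * μ * J 0 ≠ 1) (hξ : 0 ≤ ξ)
    {S : Lp 𝕜 p (volume.restrict (Ioo 0 ξ)) ≃L[𝕜] Lp 𝕜 p (volume.restrict (Ioo 0 ξ))}
    (hS : IsTruncatedWienerHopf h μ ξ S)
    {one q : Lp 𝕜 p (volume.restrict (Ioo 0 ξ))}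
    (hone : one =ᵐ[volume.restrict (Ioo 0 ξ)] fun _ => 1)
    (hq : q =ᵐ[volume.restrict (Ioo 0 ξ)] fun x => μ * J x) :
    S.symm one =ᵐ[volume.restrict (Ioo 0 ξ)]
      fun x => (1 / (1 - 2 * μ * J 0)) * (1 - S.symm q x - S.symm q (ξ - x)) := by
  set c := 1 - 2 * μ * J 0
  have hc_ne : c ≠ 0 := sub_ne_zero.mpr hμ.symm
  have h_one : one = c • S.symm one + S.symm q + reflectionLp (S.symm q) := by
    rw [← hS.symm_reflectionLp h_even, ← map_smul, ← map_add, ← map_add,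
      ← hS.map_one_eq h_even h_int hξ hJ hone hq, S.symm_apply_apply]
  rw [h_one] at hone
  filter_upwards [hone, coeFn_reflectionLp (S.symm q),
    Lp.coeFn_add (c • S.symm one + S.symm q) (reflectionLp (S.symm q)),
    Lp.coeFn_add (c • S.symm one) (S.symm q), Lp.coeFn_smul c (S.symm one)]
    with x hone_x hRr h_add h_add' h_smul
  rw [h_add, Pi.add_apply, h_add', Pi.add_apply, h_smul, Pi.smul_apply, smul_eq_mul, hRr]
    at hone_x
  field_simp
  linear_combination hone_x

end TruncatedWienerHopf

/-- Assume `∫₀^∞ h = 1/2` (improper), set `q(x) = μ ∫_x^∞ h(s) ds` and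
`r_ξ = S_ξ^{−1} q`. Then `S_ξ^{−1} 1 = (1/(1−μ)) [1 − r_ξ(x) − r_ξ(ξ−x)]` in `L²(0,ξ)`. -/
theorem statement4
    (U : ℝ) (hU : 0 < U) (ρ : ℝ → ℝ)
    (hρ_even : ∀ l : ℝ, ρ (-l) = ρ l)
    (hρ_int : Integrable ρ)
    (hρ_bd : ∀ l : ℝ, |ρ l| ≤ U)
    (h : ℝ → ℝ)
    (hh : ∀ x : ℝ, (h x : ℂ) =
      (1 / (2 * Real.pi)) * ∫ l : ℝ, Complex.exp (Complex.I * x * l) * (ρ l : ℂ))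
    (μ : ℝ) (hμ₁ : -(1 / U) < μ) (hμ₂ : μ < 1 / U) (hμ₃ : μ ≠ 1)
    (ξ : ℝ) (hξ : 0 < ξ)
    -- the improper integral of `h` over `(x,∞)`, for every `x`; for `x = 0` it equals `1/2`
    (J : ℝ → ℝ)
    (hJ : ∀ x : ℝ, Tendsto (fun T : ℝ => ∫ s in x..T, h s) atTop (nhds (J x)))
    (hJ0 : J 0 = 1 / 2)
    -- the operator `S_ξ` and its (two-sided) inverse `T`
    (S T : Lp ℂ 2 (volume.restrict (Ioo (0 : ℝ) ξ)) →L[ℂ]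
           Lp ℂ 2 (volume.restrict (Ioo (0 : ℝ) ξ)))
    (hS : ∀ f : Lp ℂ 2 (volume.restrict (Ioo (0 : ℝ) ξ)),
      (S f : ℝ → ℂ) =ᵐ[volume.restrict (Ioo (0 : ℝ) ξ)]
        fun x => f x - (μ : ℂ) * ∫ t in Ioo (0 : ℝ) ξ, (h (x - t) : ℂ) * f t)
    (hST : S.comp T = ContinuousLinearMap.id ℂ _)
    (hTS : T.comp S = ContinuousLinearMap.id ℂ _)
    -- the constant function `1` and the function `q(x) = μ ∫_x^∞ h(s) ds`, as elements of `L²(0,ξ)`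
    (one : Lp ℂ 2 (volume.restrict (Ioo (0 : ℝ) ξ)))
    (hone : (one : ℝ → ℂ) =ᵐ[volume.restrict (Ioo (0 : ℝ) ξ)] fun _ => 1)
    (qLp : Lp ℂ 2 (volume.restrict (Ioo (0 : ℝ) ξ)))
    (hq : (qLp : ℝ → ℂ) =ᵐ[volume.restrict (Ioo (0 : ℝ) ξ)] fun x => ((μ * J x : ℝ) : ℂ)) :
    (T one : ℝ → ℂ) =ᵐ[volume.restrict (Ioo (0 : ℝ) ξ)]
      fun x => (1 / (1 - (μ : ℂ))) * (1 - (T qLp : ℝ → ℂ) x - (T qLp : ℝ → ℂ) (ξ - x)) := by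
  have h_even : Function.Even fun x => (h x : ℂ) := funext hh ▸
    (even_integral_exp_smul (Function.Even.left_comp hρ_even ofReal)).left_comp (_ * ·)
  have h_cont : Continuous fun x => (h x : ℂ) := funext hh ▸
    continuous_const.mul (continuous_integral_exp_smul hρ_int.ofReal)
  have hJ_ofReal (x : ℝ) : Tendsto (fun T => ∫ s in x..T, (h s : ℂ)) atTop (𝓝 (J x)) := by
    simpa only [intervalIntegral.integral_ofReal] using (hJ x).ofReal
  have hμJ : 2 * (μ : ℂ) * J 0 = μ := by
    rw [hJ0]
    push_cast
    ring
  simpa only [hμJ, ContinuousLinearEquiv.symm_equivOfInverse',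
    ContinuousLinearEquiv.equivOfInverse'_apply] using
    statement4_general h_even h_cont.intervalIntegrable hJ_ofReal
      (by rwa [hμJ, ofReal_ne_one]) hξ.le (S := .equivOfInverse' S T hST hTS) hS hone
      (by simpa only [ofReal_mul] using hq)
end
end

section
/- Define w₁₂(ξ,z) = iz ∫₀^ξ e^{izx} (S_ξ^{−1}1)(x) dx and G(ξ,z) = (1/(1−μ)) [1 − iz ∫₀^ξ e^{−izx} r_ξ(x) dx], where r_ξ = S_ξ^{−1} q. Then for every z ∈ ℂ, w₁₂(ξ,z) = e^{izξ} G(ξ,z) − conj(G(ξ, conj(z))). -/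
open MeasureTheory Complex Set Filter
open scoped ComplexInnerProductSpace ComplexConjugate

noncomputable section

/-!
The operator `S` with kernel `δ(x - t) - μ h (x - t)` commutes with complex conjugation, because
`μ h` is real, and with the reflection `x ↦ ξ - x`, because `h` is even. Since `S` is injective,
`r = S⁻¹ q` is therefore real and `S⁻¹ (q (ξ - ·)) = r (ξ - ·)`. Splitting `∫₀^ξ h (x - t) dt` into
tails of `h`, where `q x = μ ∫ₓ^∞ h`, gives `S 1 = (1 - 2 q 0) + q + q (ξ - ·)`, and hence
`(1 - 2 q 0) S⁻¹ 1 = 1 - r - r (ξ - ·)`. Integrated against `e^{izx}`, the reflected term becomes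
`e^{izξ}` times the transform of `r` at `-iz`, and realness of `r` turns the transform at `iz` into
a conjugate.
-/

section Reflection

variable {E : Type*} [NormedAddCommGroup E] [NormedSpace ℝ E]

lemma measurePreserving_sub_left_Ioo (ξ : ℝ) :
    MeasurePreserving (fun x : ℝ => ξ - x)
      (volume.restrict (Ioo (0 : ℝ) ξ)) (volume.restrict (Ioo (0 : ℝ) ξ)) := by
  simpa using (Measure.measurePreserving_sub_left (volume : Measure ℝ) ξ).restrict_preimage
    (measurableSet_Ioo (a := (0 : ℝ)) (b := ξ))

lemma setIntegral_Ioo_comp_sub_left (ξ : ℝ) (f : ℝ → E) :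
    ∫ x in Ioo (0 : ℝ) ξ, f (ξ - x) = ∫ x in Ioo (0 : ℝ) ξ, f x :=
  (measurePreserving_sub_left_Ioo ξ).integral_comp
    (MeasurableEquiv.subLeft ξ).measurableEmbedding f

end Reflection

section FourierKernel

lemma continuous_integral_exp_mul {ρ : ℝ → ℂ} (hρ : Integrable ρ) :
    Continuous fun x : ℝ => ∫ l : ℝ, exp (I * x * l) * ρ l := by
  refine continuous_of_dominated (bound := fun l => ‖ρ l‖) (fun x => ?_) (fun x => ?_) hρ.norm
    (.of_forall fun l => by fun_prop)
  · exact (by fun_prop : Continuous fun l : ℝ => exp (I * x * l)).aestronglyMeasurable.mul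
      hρ.aestronglyMeasurable
  · exact .of_forall fun l => by simp [norm_exp]

variable {ρ h : ℝ → ℝ} {c : ℂ}

lemma continuous_of_ofReal_eq_mul_integral_exp (hρ : Integrable ρ)
    (hh : ∀ x : ℝ, (h x : ℂ) = c * ∫ l : ℝ, exp (I * x * l) * (ρ l : ℂ)) :
    Continuous h := by
  simp only [isUniformEmbedding_ofReal.isEmbedding.continuous_iff, Function.comp_def, hh]
  exact continuous_const.mul (continuous_integral_exp_mul hρ.ofReal)

lemma even_of_ofReal_eq_mul_integral_exp (hρ : ∀ l, ρ (-l) = ρ l)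
    (hh : ∀ x : ℝ, (h x : ℂ) = c * ∫ l : ℝ, exp (I * x * l) * (ρ l : ℂ)) (x : ℝ) :
    h (-x) = h x := by
  rw [← ofReal_inj, hh, hh, ← integral_neg_eq_self]
  simp [hρ]

end FourierKernel

section Tail

variable {E : Type*} [NormedAddCommGroup E] [NormedSpace ℝ E] {h J : ℝ → E}

lemma intervalIntegral_eq_tail_sub_tail (h_int : ∀ a b, IntervalIntegrable h volume a b)
    (hJ : ∀ x, Tendsto (fun T : ℝ => ∫ s in x..T, h s) atTop (nhds (J x))) (x y : ℝ) :
    ∫ s in x..y, h s = J x - J y := by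
  refine tendsto_nhds_unique (tendsto_const_nhds.congr fun T => ?_) ((hJ x).sub (hJ y))
  rw [eq_sub_iff_add_eq,
    intervalIntegral.integral_add_adjacent_intervals (h_int x y) (h_int y T)]

lemma tail_neg_of_even (h_int : ∀ a b, IntervalIntegrable h volume a b)
    (heven : ∀ x, h (-x) = h x)
    (hJ : ∀ x, Tendsto (fun T : ℝ => ∫ s in x..T, h s) atTop (nhds (J x))) (x : ℝ) :
    J (-x) = (2 : ℝ) • J 0 - J x := by
  have hsymm : ∫ s in (-x)..0, h s = ∫ s in (0 : ℝ)..x, h s := by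
    simpa [heven] using (intervalIntegral.integral_comp_neg (a := 0) (b := x) h).symm
  simp only [intervalIntegral_eq_tail_sub_tail h_int hJ, sub_eq_iff_eq_add] at hsymm
  rw [hsymm, two_smul]
  abel

lemma setIntegral_Ioo_comp_sub_left_eq_tails (h_int : ∀ a b, IntervalIntegrable h volume a b)
    (heven : ∀ x, h (-x) = h x)
    (hJ : ∀ x, Tendsto (fun T : ℝ => ∫ s in x..T, h s) atTop (nhds (J x)))
    {ξ : ℝ} (hξ : 0 ≤ ξ) (x : ℝ) :
    ∫ t in Ioo (0 : ℝ) ξ, h (x - t) = (2 : ℝ) • J 0 - J x - J (ξ - x) := by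
  rw [← integral_Ioc_eq_integral_Ioo, ← intervalIntegral.integral_of_le hξ,
    intervalIntegral.integral_comp_sub_left, intervalIntegral_eq_tail_sub_tail h_int hJ, sub_zero,
    ← neg_sub ξ x, tail_neg_of_even h_int heven hJ]
  abel

end Tail

/-- The integral operator `(S_ξ f)(x) = f(x) - μ ∫₀^ξ h(x - t) f(t) dt` with difference kernel,
acting on functions rather than on classes modulo null sets. -/
def diffKernelOp (h : ℝ → ℝ) (μ ξ : ℝ) (f : ℝ → ℂ) (x : ℝ) : ℂ :=
  f x - μ * ∫ t in Ioo (0 : ℝ) ξ, (h (x - t) : ℂ) * f t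

section DiffKernelOp

variable {h J : ℝ → ℝ} {μ ξ : ℝ} {f g : ℝ → ℂ}

lemma diffKernelOp_congr_ae (hfg : f =ᵐ[volume.restrict (Ioo 0 ξ)] g) :
    diffKernelOp h μ ξ f =ᵐ[volume.restrict (Ioo 0 ξ)] diffKernelOp h μ ξ g := by
  filter_upwards [hfg] with x hx
  have hconv : ∫ t in Ioo 0 ξ, (h (x - t) : ℂ) * f t = ∫ t in Ioo 0 ξ, (h (x - t) : ℂ) * g t :=
    integral_congr_ae (hfg.mono fun t ht => by simp only [ht])
  rw [diffKernelOp, diffKernelOp, hx, hconv]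

lemma diffKernelOp_star (f : ℝ → ℂ) :
    diffKernelOp h μ ξ (star f) = star (diffKernelOp h μ ξ f) := by
  funext x
  simp [diffKernelOp, ← integral_conj]

lemma diffKernelOp_comp_sub_left (heven : ∀ x, h (-x) = h x) (f : ℝ → ℂ) :
    diffKernelOp h μ ξ (f ∘ (ξ - ·)) = diffKernelOp h μ ξ f ∘ (ξ - ·) := by
  funext x
  have hconv : ∫ t in Ioo 0 ξ, (h (x - t) : ℂ) * f (ξ - t) =
      ∫ t in Ioo 0 ξ, (h (ξ - x - t) : ℂ) * f t := by
    rw [← setIntegral_Ioo_comp_sub_left ξ fun t => (h (ξ - x - t) : ℂ) * f t]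
    congr! 4 with t
    rw [← heven]
    congr 1
    ring
  simp only [diffKernelOp, Function.comp_apply, hconv]

lemma diffKernelOp_one (h_int : ∀ a b, IntervalIntegrable h volume a b)
    (heven : ∀ x, h (-x) = h x)
    (hJ : ∀ x, Tendsto (fun T : ℝ => ∫ s in x..T, h s) atTop (nhds (J x))) (hξ : 0 ≤ ξ) (x : ℝ) :
    diffKernelOp h μ ξ (fun _ => 1) x =
      ((1 - 2 * μ * J 0 + μ * J x + μ * J (ξ - x) : ℝ) : ℂ) := by
  simp only [diffKernelOp, mul_one]
  rw [integral_complex_ofReal, setIntegral_Ioo_comp_sub_left_eq_tails h_int heven hJ hξ]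
  push_cast [smul_eq_mul]
  ring

end DiffKernelOp

section Resolvent

variable {h J : ℝ → ℝ} {μ ξ : ℝ} {p : ENNReal}
  {S : Lp ℂ p (volume.restrict (Ioo (0 : ℝ) ξ)) →ₗ[ℂ] Lp ℂ p (volume.restrict (Ioo (0 : ℝ) ξ))}
  {u r : Lp ℂ p (volume.restrict (Ioo (0 : ℝ) ξ))}

lemma star_ae_eq_self_of_map_ae_eq_ofReal (hinj : Function.Injective S)
    (hS : ∀ f, S f =ᵐ[volume.restrict (Ioo (0 : ℝ) ξ)] diffKernelOp h μ ξ f) {q : ℝ → ℝ}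
    (hr : S r =ᵐ[volume.restrict (Ioo (0 : ℝ) ξ)] fun x => (q x : ℂ)) :
    star r =ᵐ[volume.restrict (Ioo (0 : ℝ) ξ)] r := by
  suffices hstar : star r = r by
    simpa only [hstar] using (Lp.coeFn_star r).symm
  have hSstar : S (star r) =ᵐ[volume.restrict (Ioo (0 : ℝ) ξ)] star (S r) := by
    refine ((hS _).trans (diffKernelOp_congr_ae (Lp.coeFn_star r))).trans ?_
    rw [diffKernelOp_star]
    exact (hS r).symm.fun_comp star
  refine hinj (Lp.ext ?_)
  filter_upwards [hSstar, hr] with x hx hqx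
  rw [hx, Pi.star_apply, hqx]
  exact conj_ofReal (q x)

lemma map_compMeasurePreserving_sub_left_ae_eq
    (hS : ∀ f, S f =ᵐ[volume.restrict (Ioo (0 : ℝ) ξ)] diffKernelOp h μ ξ f)
    (heven : ∀ x, h (-x) = h x) :
    S (Lp.compMeasurePreserving (ξ - ·) (measurePreserving_sub_left_Ioo ξ) r)
      =ᵐ[volume.restrict (Ioo (0 : ℝ) ξ)] S r ∘ (ξ - ·) := by
  have hrefl := measurePreserving_sub_left_Ioo ξ
  refine ((hS _).trans (diffKernelOp_congr_ae (Lp.coeFn_compMeasurePreserving r hrefl))).trans ?_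
  rw [diffKernelOp_comp_sub_left heven]
  exact hrefl.quasiMeasurePreserving.ae_eq_comp (hS r).symm

lemma smul_ae_eq_one_sub_sub_of_map_ae_eq (h_int : ∀ a b, IntervalIntegrable h volume a b)
    (heven : ∀ x, h (-x) = h x)
    (hJ : ∀ x, Tendsto (fun T : ℝ => ∫ s in x..T, h s) atTop (nhds (J x))) (hξ : 0 ≤ ξ)
    (hinj : Function.Injective S)
    (hS : ∀ f, S f =ᵐ[volume.restrict (Ioo (0 : ℝ) ξ)] diffKernelOp h μ ξ f)
    (hu : S u =ᵐ[volume.restrict (Ioo (0 : ℝ) ξ)] fun _ => 1)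
    (hr : S r =ᵐ[volume.restrict (Ioo (0 : ℝ) ξ)] fun x => ((μ * J x : ℝ) : ℂ)) :
    (fun x => ((1 - 2 * μ * J 0 : ℝ) : ℂ) * u x)
      =ᵐ[volume.restrict (Ioo (0 : ℝ) ξ)] fun x => 1 - r x - r (ξ - x) := by
  have hrefl := measurePreserving_sub_left_Ioo ξ
  set κ : ℂ := ((1 - 2 * μ * J 0 : ℝ) : ℂ) with hκ
  set r' := Lp.compMeasurePreserving (ξ - ·) hrefl r
  have hSr' : S r' =ᵐ[volume.restrict (Ioo (0 : ℝ) ξ)] fun x => ((μ * J (ξ - x) : ℝ) : ℂ) :=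
    (map_compMeasurePreserving_sub_left_ae_eq hS heven).trans
      (hrefl.quasiMeasurePreserving.ae_eq_comp hr)
  have hSone : S (S u) =ᵐ[volume.restrict (Ioo (0 : ℝ) ξ)]
      fun x => ((1 - 2 * μ * J 0 + μ * J x + μ * J (ξ - x) : ℝ) : ℂ) :=
    (hS _).trans <| (diffKernelOp_congr_ae hu).trans <|
      .of_forall (diffKernelOp_one h_int heven hJ hξ)
  have hsolution : κ • u = S u - r - r' := by
    refine hinj (Lp.ext ?_)
    rw [map_smul, map_sub, map_sub]
    filter_upwards [Lp.coeFn_smul κ (S u), Lp.coeFn_sub (S (S u) - S r) (S r'),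
      Lp.coeFn_sub (S (S u)) (S r), hu, hr, hSr', hSone]
      with x hsmul hsub hsub' hux hrx hrx' hx
    rw [hsmul, hsub, Pi.smul_apply, Pi.sub_apply, hsub', Pi.sub_apply, hux, hrx, hrx', hx, hκ]
    push_cast [smul_eq_mul]
    ring
  filter_upwards [Lp.coeFn_smul κ u, Lp.coeFn_sub (S u - r) r', Lp.coeFn_sub (S u) r, hu,
    Lp.coeFn_compMeasurePreserving r hrefl] with x hsmul hsub hsub' hux hrx'
  rw [← smul_eq_mul, ← Pi.smul_apply, ← hsmul, hsolution, hsub, Pi.sub_apply, hsub', Pi.sub_apply,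
    hux, hrx', Function.comp_apply]

end Resolvent

/-- The entire function `c ↦ ∫₀^ξ e^{cx} f(x) dx`; `c = iz` and `c = -iz` give the two transforms
in `w₁₂` and `G`. -/
def truncatedLaplace (ξ : ℝ) (f : ℝ → ℂ) (c : ℂ) : ℂ :=
  ∫ x in Ioo (0 : ℝ) ξ, exp (c * x) * f x

section TruncatedLaplace

variable {ξ : ℝ} {f g : ℝ → ℂ}

lemma integrableOn_exp_mul (hf : IntegrableOn f (Ioo 0 ξ)) (c : ℂ) :
    IntegrableOn (fun x : ℝ => exp (c * x) * f x) (Ioo 0 ξ) := by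
  rw [← integrableOn_Icc_iff_integrableOn_Ioo] at hf ⊢
  exact hf.continuousOn_mul (by fun_prop) isCompact_Icc

lemma truncatedLaplace_congr_ae (hfg : f =ᵐ[volume.restrict (Ioo 0 ξ)] g) :
    truncatedLaplace ξ f = truncatedLaplace ξ g := by
  funext c
  exact integral_congr_ae (hfg.mono fun x hx => by simp only [hx])

lemma truncatedLaplace_const_mul (a : ℂ) (f : ℝ → ℂ) (c : ℂ) :
    truncatedLaplace ξ (fun x => a * f x) c = a * truncatedLaplace ξ f c := by
  simp only [truncatedLaplace, mul_left_comm _ a, integral_const_mul]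

lemma truncatedLaplace_sub (hf : IntegrableOn f (Ioo 0 ξ)) (hg : IntegrableOn g (Ioo 0 ξ))
    (c : ℂ) :
    truncatedLaplace ξ (fun x => f x - g x) c =
      truncatedLaplace ξ f c - truncatedLaplace ξ g c := by
  simp only [truncatedLaplace, mul_sub]
  exact integral_sub (integrableOn_exp_mul hf c) (integrableOn_exp_mul hg c)

lemma mul_truncatedLaplace_one (hξ : 0 ≤ ξ) (c : ℂ) :
    c * truncatedLaplace ξ (fun _ => 1) c = exp (c * ξ) - 1 := by
  rcases eq_or_ne c 0 with rfl | hc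
  · simp
  · simp only [truncatedLaplace, mul_one]
    rw [← integral_Ioc_eq_integral_Ioo, ← intervalIntegral.integral_of_le hξ,
      integral_exp_mul_complex hc, mul_div_cancel₀ _ hc]
    simp

lemma truncatedLaplace_comp_sub_left (f : ℝ → ℂ) (c : ℂ) :
    truncatedLaplace ξ (fun x => f (ξ - x)) c = exp (c * ξ) * truncatedLaplace ξ f (-c) := by
  simp only [truncatedLaplace]
  rw [← setIntegral_Ioo_comp_sub_left ξ fun x => exp (-c * x) * f x, ← integral_const_mul]
  congr 1 with x
  rw [← mul_assoc, ← exp_add]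
  congr 2
  push_cast
  ring

lemma conj_truncatedLaplace (f : ℝ → ℂ) (c : ℂ) :
    conj (truncatedLaplace ξ f c) = truncatedLaplace ξ (star f) (conj c) := by
  simp [truncatedLaplace, ← integral_conj, ← exp_conj]

lemma mul_truncatedLaplace_of_ae_eq_one_sub_sub {u r : ℝ → ℂ} {κ : ℂ} (hξ : 0 ≤ ξ)
    (hr : IntegrableOn r (Ioo 0 ξ)) (hreal : star r =ᵐ[volume.restrict (Ioo 0 ξ)] r)
    (hu : (fun x => κ * u x) =ᵐ[volume.restrict (Ioo 0 ξ)] fun x => 1 - r x - r (ξ - x)) (c : ℂ) :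
    κ * (c * truncatedLaplace ξ u c) =
      exp (c * ξ) * (1 - c * truncatedLaplace ξ r (-c)) -
        conj (1 + conj c * truncatedLaplace ξ r (conj c)) := by
  have hone : IntegrableOn (fun _ : ℝ => (1 : ℂ)) (Ioo 0 ξ) := by simp
  have hr_sub : IntegrableOn (fun x => r (ξ - x)) (Ioo 0 ξ) :=
    (measurePreserving_sub_left_Ioo ξ).integrable_comp_of_integrable hr
  have hlaplace : κ * truncatedLaplace ξ u c = truncatedLaplace ξ (fun _ => 1) c -
      truncatedLaplace ξ r c - exp (c * ξ) * truncatedLaplace ξ r (-c) := by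
    rw [← truncatedLaplace_const_mul, truncatedLaplace_congr_ae hu,
      truncatedLaplace_sub (f := fun x => 1 - r x) (hone.sub hr) hr_sub,
      truncatedLaplace_sub hone hr, truncatedLaplace_comp_sub_left]
  have hconj : conj (1 + conj c * truncatedLaplace ξ r (conj c)) =
      1 + c * truncatedLaplace ξ r c := by
    simp only [map_add, map_one, map_mul, conj_conj, conj_truncatedLaplace,
      truncatedLaplace_congr_ae hreal]
  rw [hconj]
  linear_combination c * hlaplace + mul_truncatedLaplace_one hξ c

end TruncatedLaplace

theorem statement5_general {p : ENNReal} [Fact (1 ≤ p)] {h J : ℝ → ℝ} {μ ξ : ℝ}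
    (h_int : ∀ a b, IntervalIntegrable h volume a b) (heven : ∀ x, h (-x) = h x)
    (hJ : ∀ x, Tendsto (fun T : ℝ => ∫ s in x..T, h s) atTop (nhds (J x)))
    (hκ : 1 - 2 * μ * J 0 ≠ 0) (hξ : 0 ≤ ξ)
    {S : Lp ℂ p (volume.restrict (Ioo (0 : ℝ) ξ)) →ₗ[ℂ] Lp ℂ p (volume.restrict (Ioo (0 : ℝ) ξ))}
    (hS : ∀ f, S f =ᵐ[volume.restrict (Ioo (0 : ℝ) ξ)] diffKernelOp h μ ξ f)
    (hinj : Function.Injective S)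
    {u r : Lp ℂ p (volume.restrict (Ioo (0 : ℝ) ξ))}
    (hu : S u =ᵐ[volume.restrict (Ioo (0 : ℝ) ξ)] fun _ => 1)
    (hr : S r =ᵐ[volume.restrict (Ioo (0 : ℝ) ξ)] fun x => ((μ * J x : ℝ) : ℂ))
    {w G : ℂ → ℂ} (hw : ∀ z, w z = I * z * truncatedLaplace ξ u (I * z))
    (hG : ∀ z, G z = (1 / (1 - 2 * μ * J 0 : ℝ) : ℂ) *
      (1 - I * z * truncatedLaplace ξ r (-(I * z)))) (z : ℂ) :
    w z = exp (I * z * ξ) * G z - conj (G (conj z)) := by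
  have hreal := star_ae_eq_self_of_map_ae_eq_ofReal hinj hS hr
  have hsolution := smul_ae_eq_one_sub_sub_of_map_ae_eq h_int heven hJ hξ hinj hS hu hr
  have htransform := mul_truncatedLaplace_of_ae_eq_one_sub_sub hξ
    ((Lp.memLp r).integrable Fact.out) hreal hsolution (I * z)
  have hκG (z : ℂ) : ((1 - 2 * μ * J 0 : ℝ) : ℂ) * G z =
      1 - I * z * truncatedLaplace ξ r (-(I * z)) := by
    rw [hG, ← mul_assoc, mul_one_div_cancel (ofReal_ne_zero.mpr hκ), one_mul]
  have hκG_conj : ((1 - 2 * μ * J 0 : ℝ) : ℂ) * conj (G (conj z)) =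
      conj (1 + conj (I * z) * truncatedLaplace ξ r (conj (I * z))) := by
    have hIz : conj (I * z) = -(I * conj z) := by simp
    rw [hIz, neg_mul, ← sub_eq_add_neg, ← hκG, map_mul, conj_ofReal]
  refine mul_left_cancel₀ (ofReal_ne_zero.mpr hκ) ?_
  rw [hw, htransform, ← hκG, ← hκG_conj]
  ring

/-- With `w₁₂(ξ,z) = iz ∫₀^ξ e^{izx} (S_ξ^{−1}1)(x) dx` and
`G(ξ,z) = (1/(1−μ))[1 − iz ∫₀^ξ e^{−izx} r_ξ(x) dx]`, `r_ξ = S_ξ^{−1} q`, one has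
`w₁₂(ξ,z) = e^{izξ} G(ξ,z) − conj(G(ξ, conj z))` for every `z ∈ ℂ`. -/
theorem statement5
    (U : ℝ) (hU : 0 < U) (ρ : ℝ → ℝ)
    (hρ_even : ∀ l : ℝ, ρ (-l) = ρ l)
    (hρ_int : Integrable ρ)
    (hρ_bd : ∀ l : ℝ, |ρ l| ≤ U)
    (h : ℝ → ℝ)
    (hh : ∀ x : ℝ, (h x : ℂ) =
      (1 / (2 * Real.pi)) * ∫ l : ℝ, Complex.exp (Complex.I * x * l) * (ρ l : ℂ))
    (μ : ℝ) (hμ₁ : -(1 / U) < μ) (hμ₂ : μ < 1 / U) (hμ₃ : μ ≠ 1)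
    (ξ : ℝ) (hξ : 0 < ξ)
    (J : ℝ → ℝ)
    (hJ : ∀ x : ℝ, Tendsto (fun T : ℝ => ∫ s in x..T, h s) atTop (nhds (J x)))
    (hJ0 : J 0 = 1 / 2)
    (S T : Lp ℂ 2 (volume.restrict (Ioo (0 : ℝ) ξ)) →L[ℂ]
           Lp ℂ 2 (volume.restrict (Ioo (0 : ℝ) ξ)))
    (hS : ∀ f : Lp ℂ 2 (volume.restrict (Ioo (0 : ℝ) ξ)),
      (S f : ℝ → ℂ) =ᵐ[volume.restrict (Ioo (0 : ℝ) ξ)]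
        fun x => f x - (μ : ℂ) * ∫ t in Ioo (0 : ℝ) ξ, (h (x - t) : ℂ) * f t)
    (hST : S.comp T = ContinuousLinearMap.id ℂ _)
    (hTS : T.comp S = ContinuousLinearMap.id ℂ _)
    (one : Lp ℂ 2 (volume.restrict (Ioo (0 : ℝ) ξ)))
    (hone : (one : ℝ → ℂ) =ᵐ[volume.restrict (Ioo (0 : ℝ) ξ)] fun _ => 1)
    (qLp : Lp ℂ 2 (volume.restrict (Ioo (0 : ℝ) ξ)))
    (hq : (qLp : ℝ → ℂ) =ᵐ[volume.restrict (Ioo (0 : ℝ) ξ)] fun x => ((μ * J x : ℝ) : ℂ))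
    -- `w₁₂(ξ, ·)` and `G(ξ, ·)`
    (w G : ℂ → ℂ)
    (hw : ∀ z : ℂ, w z =
      Complex.I * z * ∫ x in Ioo (0 : ℝ) ξ, Complex.exp (Complex.I * z * x) * (T one : ℝ → ℂ) x)
    (hG : ∀ z : ℂ, G z = (1 / (1 - (μ : ℂ))) *
      (1 - Complex.I * z *
        ∫ x in Ioo (0 : ℝ) ξ, Complex.exp (-(Complex.I * z * x)) * (T qLp : ℝ → ℂ) x)) :
    ∀ z : ℂ, w z = Complex.exp (Complex.I * z * ξ) * G z - conj (G (conj z)) := by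
  have hκ : 1 - 2 * μ * J 0 = 1 - μ := by rw [hJ0]; ring
  have hST' (f) : S (T f) = f := DFunLike.congr_fun hST f
  exact statement5_general
    (continuous_of_ofReal_eq_mul_integral_exp hρ_int hh).intervalIntegrable
    (even_of_ofReal_eq_mul_integral_exp hρ_even hh) hJ (hκ ▸ sub_ne_zero.mpr hμ₃.symm) hξ.le
    (S := S.toLinearMap) hS (Function.LeftInverse.injective (DFunLike.congr_fun hTS))
    ((hST' one).symm ▸ hone) ((hST' qLp).symm ▸ hq)
    hw (by simpa only [truncatedLaplace, hκ, neg_mul, ofReal_sub, ofReal_one] using hG)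
end
end

section
/- Let S be a bounded, positive definite, invertible operator on L²(0,∞) which admits a left triangular factorization S = S₋S₋*. For ξ > 0 let S_ξ = P_ξ S P_ξ regarded as an operator on the subspace P_ξ L²(0,∞). Then each S_ξ is invertible on P_ξ L²(0,∞), and for every f ∈ L²(0,∞) one has S_ξ^{−1} P_ξ f → S^{−1} f in L²(0,∞) as ξ → ∞. -/
open MeasureTheory Complex Set Filter
open scoped ComplexInnerProductSpace

noncomputable section

local notation "L2" => Lp ℂ 2 (volume.restrict (Ioi (0 : ℝ)))

/-- An operator is lower triangular (w.r.t. the projections `Q ξ = I − P ξ`) if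
`S₋ Q_ξ = Q_ξ S₋ Q_ξ` for every `ξ > 0`. -/
def IsLowerTriangular (Q : ℝ → (L2 →L[ℂ] L2)) (A : L2 →L[ℂ] L2) : Prop :=
  ∀ ξ : ℝ, 0 < ξ → A.comp (Q ξ) = (Q ξ).comp (A.comp (Q ξ))

/-- `S` admits a left triangular factorization `S = S₋ S₋*` with `S₋, S₋⁻¹` bounded and
lower triangular. -/
def AdmitsLeftTriangularFactorization (Q : ℝ → (L2 →L[ℂ] L2))
    (S : L2 →L[ℂ] L2) : Prop :=
  ∃ Sm Sminv : L2 →L[ℂ] L2,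
    IsLowerTriangular Q Sm ∧ IsLowerTriangular Q Sminv ∧
    Sm.comp Sminv = ContinuousLinearMap.id ℂ L2 ∧
    Sminv.comp Sm = ContinuousLinearMap.id ℂ L2 ∧
    S = Sm.comp (ContinuousLinearMap.adjoint Sm)

/-!
With respect to `L²(0,∞) = L²(0,ξ) ⊕ L²(ξ,∞)` the factor `S₋` is block lower triangular and `S₋*`
is block upper triangular. For such a product lower × upper the upper left corner of the product is
the product of the upper left corners, and the corner of a triangular operator is inverted by the
corner of its inverse. Hence `S_ξ⁻¹ = (S₋*)⁻¹ P_ξ S₋⁻¹` and, again by triangularity,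
`S_ξ⁻¹ P_ξ f = (S₋*)⁻¹ P_ξ S₋⁻¹ f`. As `P_ξ → I` strongly, this tends to `(S₋*)⁻¹ S₋⁻¹ f = S⁻¹ f`.
-/

section Triangular

variable {M : Type*} [Monoid M] {p : M} {a b : Mˣ}

/-- An invertible element which is, together with its inverse, block lower triangular with respect
to `p`: for an idempotent `p` in a ring, the equation `p * x * p = p * x` says that the upper right
block `p * x * (1 - p)` of `x` vanishes. -/
structure IsBlockLowerUnit (p : M) (a : Mˣ) : Prop where
  mul_val_mul : p * a * p = p * a
  mul_inv_mul : p * ↑a⁻¹ * p = p * ↑a⁻¹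

/-- An invertible element which is, together with its inverse, block upper triangular with respect
to `p`: for an idempotent `p` in a ring, the equation `p * x * p = x * p` says that the lower left
block `(1 - p) * x * p` of `x` vanishes. -/
structure IsBlockUpperUnit (p : M) (a : Mˣ) : Prop where
  mul_val_mul : p * a * p = a * p
  mul_inv_mul : p * ↑a⁻¹ * p = ↑a⁻¹ * p

/-- For an idempotent `p`, `t` is the inverse of the compression `p * s * p` in the corner monoid
`p M p`, whose unit is `p`. For a projection `p` on a vector space, `t` is the inverse of the
compression of `s` to the range of `p`, extended by zero to the kernel of `p`. -/
structure IsCompressionInverse (p s t : M) : Prop where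
  eq_corner : t = p * (t * p)
  compression_mul : p * (s * p) * t = p
  mul_compression : t * (p * (s * p)) = p

theorem IsBlockLowerUnit.isBlockUpperUnit_star [StarMul M] (ha : IsBlockLowerUnit p a)
    (hp : IsSelfAdjoint p) : IsBlockUpperUnit p (star a) where
  mul_val_mul := by
    simpa only [star_mul, hp.star_eq, Units.coe_star, mul_assoc] using
      congrArg star ha.mul_val_mul
  mul_inv_mul := by
    simpa only [star_mul, hp.star_eq, Units.coe_star_inv, mul_assoc] using
      congrArg star ha.mul_inv_mul

theorem IsBlockLowerUnit.isCompressionInverse_mul (ha : IsBlockLowerUnit p a)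
    (hb : IsBlockUpperUnit p b) :
    IsCompressionInverse p (↑(a * b)) (↑b⁻¹ * p * ↑a⁻¹) where
  eq_corner :=
    calc ↑b⁻¹ * p * ↑a⁻¹ = p * ↑b⁻¹ * (p * ↑a⁻¹) := by rw [← mul_assoc, hb.mul_inv_mul]
      _ = p * ↑b⁻¹ * (p * ↑a⁻¹ * p) := by rw [ha.mul_inv_mul]
      _ = p * (↑b⁻¹ * p * ↑a⁻¹ * p) := by simp only [mul_assoc]
  compression_mul :=
    calc p * (↑(a * b) * p) * (↑b⁻¹ * p * ↑a⁻¹)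
        = p * a * (b * (p * ↑b⁻¹ * p)) * ↑a⁻¹ := by simp only [Units.val_mul, mul_assoc]
      _ = p * a * p * ↑a⁻¹ := by rw [hb.mul_inv_mul, Units.mul_inv_cancel_left]
      _ = p := by rw [ha.mul_val_mul, Units.mul_inv_cancel_right]
  mul_compression :=
    calc ↑b⁻¹ * p * ↑a⁻¹ * (p * (↑(a * b) * p))
        = ↑b⁻¹ * (p * ↑a⁻¹ * p * a * b * p) := by simp only [Units.val_mul, mul_assoc]
      _ = ↑b⁻¹ * (p * b * p) := by rw [ha.mul_inv_mul, Units.inv_mul_cancel_right]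
      _ = p := by rw [hb.mul_val_mul, Units.inv_mul_cancel_left]

theorem mul_one_sub_eq_one_sub_mul_iff {R : Type*} [Ring R] {p x : R} :
    x * (1 - p) = (1 - p) * (x * (1 - p)) ↔ p * x * p = p * x := by
  rw [sub_mul, one_mul, eq_comm, sub_eq_self, ← mul_assoc, mul_sub, mul_one, sub_eq_zero, eq_comm]

end Triangular

theorem statement8_general {R E ι : Type*} [Semiring R] [AddCommMonoid E] [TopologicalSpace E]
    [Module R E] {l : Filter ι} {I : Set ι} (hI : I ∈ l) {P : ι → E →L[R] E}
    (hP : ∀ x, Tendsto (fun i => P i x) l (nhds x)) {A B : (E →L[R] E)ˣ}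
    (hA : ∀ i ∈ I, IsBlockLowerUnit (P i) A) (hB : ∀ i ∈ I, IsBlockUpperUnit (P i) B) :
    ∃ T : ι → E →L[R] E, (∀ i ∈ I, IsCompressionInverse (P i) (↑(A * B)) (T i)) ∧
      ∀ x, Tendsto (fun i => T i (P i x)) l (nhds ((↑(A * B)⁻¹ : E →L[R] E) x)) := by
  refine ⟨fun i => ↑B⁻¹ * P i * ↑A⁻¹,
    fun i hi => (hA i hi).isCompressionInverse_mul (hB i hi), fun x => ?_⟩
  have hlim : Tendsto (fun i => (↑B⁻¹ : E →L[R] E) (P i ((↑A⁻¹ : E →L[R] E) x))) l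
      (nhds ((↑(A * B)⁻¹ : E →L[R] E) x)) := by
    rw [mul_inv_rev]
    exact ((↑B⁻¹ : E →L[R] E).continuous.tendsto _).comp (hP _)
  refine hlim.congr' ?_
  filter_upwards [hI] with i hi
  exact congrArg (↑B⁻¹ : E →L[R] E) (DFunLike.congr_fun (hA i hi).mul_inv_mul x).symm

section Indicator

variable {α ι E : Type*} [MeasurableSpace α] {μ : Measure α} [NormedAddCommGroup E]

theorem tendsto_eLpNorm_zero_of_dominated {p : ENNReal} (hp : p ≠ ⊤) {l : Filter ι}
    [l.IsCountablyGenerated] {F : ι → α → E} {g : α → E} (hg : MemLp g p μ)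
    (hF : ∀ᶠ i in l, AEStronglyMeasurable (F i) μ)
    (hbound : ∀ᶠ i in l, ∀ᵐ x ∂μ, ‖F i x‖ₑ ≤ ‖g x‖ₑ)
    (hlim : ∀ᵐ x ∂μ, Tendsto (fun i => F i x) l (nhds 0)) :
    Tendsto (fun i => eLpNorm (F i) p μ) l (nhds 0) := by
  rcases eq_or_ne p 0 with rfl | hp₀
  · simp only [eLpNorm_exponent_zero, tendsto_const_nhds]
  have hp_pos : 0 < p.toReal := ENNReal.toReal_pos hp₀ hp
  have hlintegral : Tendsto (fun i => ∫⁻ x, ‖F i x‖ₑ ^ p.toReal ∂μ) l (nhds (∫⁻ _, 0 ∂μ)) := by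
    refine tendsto_lintegral_filter_of_dominated_convergence' (fun x => ‖g x‖ₑ ^ p.toReal)
      (hF.mono fun i hi => hi.enorm.pow_const _)
      (hbound.mono fun i hi => hi.mono fun x hx => ENNReal.rpow_le_rpow hx hp_pos.le)
      (lintegral_rpow_enorm_lt_top_of_eLpNorm_lt_top hp₀ hp hg.2).ne (hlim.mono fun x hx => ?_)
    simpa [hp_pos] using hx.enorm.ennrpow_const p.toReal
  simpa [eLpNorm_eq_lintegral_rpow_enorm_toReal hp₀ hp, hp_pos] using
    hlintegral.ennrpow_const (1 / p.toReal)

theorem tendsto_Lp_of_ae_eq_indicator {p : ENNReal} [Fact (1 ≤ p)] (hp : p ≠ ⊤) {l : Filter ι}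
    [l.IsCountablyGenerated] {s : ι → Set α} (hs : ∀ᵐ x ∂μ, ∀ᶠ i in l, x ∈ s i) {f : Lp E p μ}
    {F : ι → Lp E p μ} (hF : ∀ i, F i =ᵐ[μ] (s i).indicator f) : Tendsto F l (nhds f) := by
  rw [Lp.tendsto_Lp_iff_tendsto_eLpNorm']
  have hcompl : ∀ i, ⇑(F i) - ⇑f =ᵐ[μ] -(s i)ᶜ.indicator f := fun i => by
    filter_upwards [hF i] with x hx
    simp [hx, indicator_compl]
  -- The null sets on which `F i` differs from the indicator may cover everything as `i` varies, so
  -- the representatives have to be replaced before passing to pointwise limits.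
  simp only [eLpNorm_congr_ae (hcompl _)]
  refine tendsto_eLpNorm_zero_of_dominated hp (Lp.memLp f) (.of_forall fun i => ?_)
    (.of_forall fun i => .of_forall fun x => ?_) (hs.mono fun x hx => ?_)
  · exact ((Lp.aestronglyMeasurable _).sub (Lp.aestronglyMeasurable _)).congr (hcompl i)
  · simpa using enorm_indicator_le_enorm_self f x
  · exact tendsto_const_nhds.congr' (hx.mono fun i hi => by simp [hi])

theorem isSelfAdjoint_of_ae_eq_indicator {𝕜 : Type*} [RCLike 𝕜] [InnerProductSpace 𝕜 E]
    [CompleteSpace E] {s : Set α} {P : Lp E 2 μ →L[𝕜] Lp E 2 μ}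
    (hP : ∀ f, P f =ᵐ[μ] s.indicator f) : IsSelfAdjoint P := by
  refine Eq.symm ((ContinuousLinearMap.eq_adjoint_iff P P).2 fun f g => ?_)
  rw [L2.inner_def, L2.inner_def]
  refine integral_congr_ae ?_
  filter_upwards [hP f, hP g] with x hf hg
  by_cases hx : x ∈ s <;> simp [hf, hg, hx]

end Indicator

theorem AdmitsLeftTriangularFactorization.exists_isBlockLowerUnit {P Q : ℝ → (L2 →L[ℂ] L2)}
    (hQ : ∀ ξ, Q ξ = ContinuousLinearMap.id ℂ L2 - P ξ) {S : L2 →L[ℂ] L2}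
    (hS : AdmitsLeftTriangularFactorization Q S) :
    ∃ A : (L2 →L[ℂ] L2)ˣ, S = ↑(A * star A) ∧ ∀ ξ ∈ Ioi 0, IsBlockLowerUnit (P ξ) A := by
  obtain rfl : Q = fun ξ => 1 - P ξ := funext hQ
  obtain ⟨A, A', hA, hA', hAA', hA'A, hS⟩ := hS
  exact ⟨⟨A, A', hAA', hA'A⟩, hS, fun ξ hξ =>
    ⟨mul_one_sub_eq_one_sub_mul_iff.1 (hA ξ hξ), mul_one_sub_eq_one_sub_mul_iff.1 (hA' ξ hξ)⟩⟩

/-- If `S` is bounded, positive definite, invertible and admits a left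
triangular factorization, then the compressions `S_ξ = P_ξ S P_ξ` are invertible on
`P_ξ L²(0,∞)` and `S_ξ^{−1} P_ξ f → S^{−1} f` as `ξ → ∞`. -/
theorem statement8
    (P : ℝ → (L2 →L[ℂ] L2))
    (hP : ∀ (ξ : ℝ) (f : L2), (P ξ f : ℝ → ℂ) =ᵐ[volume.restrict (Ioi (0 : ℝ))]
      fun x => if x < ξ then f x else 0)
    (Q : ℝ → (L2 →L[ℂ] L2))
    (hQ : ∀ ξ : ℝ, Q ξ = ContinuousLinearMap.id ℂ L2 - P ξ)
    (S Sinv : L2 →L[ℂ] L2)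
    (hpos : ∃ δ : ℝ, 0 < δ ∧ ∀ f : L2, δ * ‖f‖ ^ 2 ≤ (⟪S f, f⟫).re)
    (hSinv₁ : S.comp Sinv = ContinuousLinearMap.id ℂ L2)
    (hSinv₂ : Sinv.comp S = ContinuousLinearMap.id ℂ L2)
    (hfact : AdmitsLeftTriangularFactorization Q S) :
    ∃ T : ℝ → (L2 →L[ℂ] L2),
      (∀ ξ : ℝ, 0 < ξ →
        (∀ f : L2, T ξ f = P ξ (T ξ (P ξ f))) ∧
        ((P ξ).comp (S.comp (P ξ))).comp (T ξ) = P ξ ∧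
        (T ξ).comp ((P ξ).comp (S.comp (P ξ))) = P ξ) ∧
      (∀ f : L2, Tendsto (fun ξ : ℝ => T ξ (P ξ f)) atTop (nhds (Sinv f))) := by
  obtain ⟨A, rfl, hA⟩ := hfact.exists_isBlockLowerUnit hQ
  obtain rfl : Sinv = ↑(A * star A)⁻¹ := Units.eq_inv_of_mul_eq_one_left hSinv₁
  have hP_indicator : ∀ ξ f, P ξ f =ᵐ[volume.restrict (Ioi (0 : ℝ))] (Iio ξ).indicator f :=
    fun ξ f => (hP ξ f).trans (.of_eq (funext fun x => by simp [indicator_apply]))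
  have hP_tendsto : ∀ f, Tendsto (fun ξ => P ξ f) atTop (nhds f) := fun f =>
    tendsto_Lp_of_ae_eq_indicator ENNReal.ofNat_ne_top (.of_forall eventually_gt_atTop)
      fun ξ => hP_indicator ξ f
  have hA_star : ∀ ξ ∈ Ioi 0, IsBlockUpperUnit (P ξ) (star A) := fun ξ hξ =>
    (hA ξ hξ).isBlockUpperUnit_star (isSelfAdjoint_of_ae_eq_indicator (hP_indicator ξ))
  obtain ⟨T, hT, hT_tendsto⟩ := statement8_general (Ioi_mem_atTop 0) hP_tendsto hA hA_star
  exact ⟨T, fun ξ hξ => ⟨DFunLike.congr_fun (hT ξ hξ).eq_corner, (hT ξ hξ).compression_mul,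
    (hT ξ hξ).mul_compression⟩, hT_tendsto⟩
end
end

section
/- For every z ∈ ℂ with Im z > 0, the function t ↦ (1 + tz)/((z − t)(1 + t²)) is Lebesgue integrable on ℝ and ∫_{−∞}^∞ (1 + tz)/((z − t)(1 + t²)) dt = −πi. Consequently, for any constant c > 0, −(1/(2πi)) ∫_{−∞}^∞ (1 + tz)/((z − t)(1 + t²)) (log c) dt = (1/2) log c. -/
open MeasureTheory Complex Filter

noncomputable section

/-!
Partial fractions give `(1 + t z) / ((z - t) (1 + t²)) = 1 / (z - t) + t / (1 + t²)`, and the same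
identity at `z = i`, where the left side collapses to `-i / (1 + t²)`, shows that the integrand is
`(1 / (z - t) - 1 / (i - t)) - i / (1 + t²)`. The bracket integrates to zero, having the primitive
`-log ((z - t) / (i - t))`: the quotient avoids the branch cut because both points lie on the same
side of the real line, and it tends to `1` at both ends. The remaining term contributes `-π i`.
-/

theorem sub_ofReal_ne_zero {z : ℂ} (hz : z.im ≠ 0) (t : ℝ) : z - t ≠ 0 :=
  fun h => hz (by simpa using congrArg im h)

theorem one_add_ofReal_sq_ne_zero (t : ℝ) : 1 + (t : ℂ) ^ 2 ≠ 0 := by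
  exact_mod_cast (by positivity : 1 + t ^ 2 ≠ 0)

theorem integrable_norm_inv_sub_ofReal_sq {z : ℂ} (hz : z.im ≠ 0) :
    Integrable fun t : ℝ => ‖(z - t)⁻¹‖ ^ 2 := by
  have h : Integrable fun t : ℝ => (z.im ^ 2)⁻¹ * (1 + ((t - z.re) / z.im) ^ 2)⁻¹ :=
    ((integrable_inv_one_add_sq.comp_div hz).comp_sub_right z.re).const_mul _
  refine h.congr (.of_forall fun t => ?_)
  have norm_sq : ‖z - t‖ ^ 2 = z.im ^ 2 * (1 + ((t - z.re) / z.im) ^ 2) := by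
    rw [Complex.sq_norm, normSq_apply, sub_re, sub_im, ofReal_re, ofReal_im]
    field_simp
    ring
  simp only [norm_inv, inv_pow, norm_sq, mul_inv]

theorem memLp_two_inv_sub_ofReal {z : ℂ} (hz : z.im ≠ 0) :
    MemLp (fun t : ℝ => (z - t)⁻¹) 2 := by
  have hcont : Continuous fun t : ℝ => (z - t)⁻¹ :=
    Continuous.inv₀ (by fun_prop) (sub_ofReal_ne_zero hz)
  exact (memLp_two_iff_integrable_sq_norm hcont.aestronglyMeasurable).2
    (integrable_norm_inv_sub_ofReal_sq hz)

theorem integrable_inv_sub_ofReal_sub_inv_sub_ofReal {z w : ℂ} (hz : z.im ≠ 0) (hw : w.im ≠ 0) :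
    Integrable fun t : ℝ => (z - t)⁻¹ - (w - t)⁻¹ := by
  have h : Integrable fun t : ℝ => (w - z) * ((z - t)⁻¹ * (w - t)⁻¹) :=
    ((memLp_two_inv_sub_ofReal hz).integrable_mul (memLp_two_inv_sub_ofReal hw)).const_mul _
  refine h.congr (.of_forall fun t => ?_)
  have hzt := sub_ofReal_ne_zero hz t
  have hwt := sub_ofReal_ne_zero hw t
  simp only
  field_simp
  ring

theorem div_mem_slitPlane_of_im_mul_im_pos {z w : ℂ} (h : 0 < z.im * w.im) :
    z / w ∈ slitPlane := by
  rw [mem_slitPlane_iff]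
  by_contra! hcut
  obtain ⟨hre, him⟩ := hcut
  have hw : w ≠ 0 := by
    rintro rfl
    simp at h
  have z_im : z.im = (z / w).re * w.im := by
    rw [← add_zero ((z / w).re * w.im), ← zero_mul w.re, ← him, ← mul_im, div_mul_cancel₀ z hw]
  have : z.im * w.im ≤ 0 := by
    rw [z_im, mul_assoc]
    exact mul_nonpos_of_nonpos_of_nonneg hre (mul_self_nonneg _)
  exact this.not_gt h

theorem hasDerivAt_neg_log_sub_ofReal_div {z w : ℂ} (h : 0 < z.im * w.im) (t : ℝ) :
    HasDerivAt (fun t : ℝ => -log ((z - t) / (w - t))) ((z - t)⁻¹ - (w - t)⁻¹) t := by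
  have hzt : z - t ≠ 0 := sub_ofReal_ne_zero (left_ne_zero_of_mul h.ne') t
  have hwt : w - t ≠ 0 := sub_ofReal_ne_zero (right_ne_zero_of_mul h.ne') t
  have hslit : (z - t) / (w - t) ∈ slitPlane :=
    div_mem_slitPlane_of_im_mul_im_pos (by simpa using h)
  have hofReal : HasDerivAt (fun t : ℝ => (t : ℂ)) 1 t := (hasDerivAt_id t).ofReal_comp
  have hdiv := (hofReal.const_sub z).div (hofReal.const_sub w) hwt
  refine (hdiv.clog_real hslit).neg.congr_deriv ?_
  simp only [Pi.div_apply]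
  field_simp
  ring

theorem tendsto_sub_div_sub_cobounded {𝕜 : Type*} [NormedField 𝕜] (a b : 𝕜) :
    Tendsto (fun x => (a - x) / (b - x)) (Bornology.cobounded 𝕜) (nhds 1) := by
  have hinv : Tendsto (fun x => (b - x)⁻¹) (Bornology.cobounded 𝕜) (nhds 0) :=
    tendsto_inv₀_cobounded.comp (tendsto_const_sub_cobounded b)
  have h : Tendsto (fun x => 1 + (a - b) * (b - x)⁻¹) (Bornology.cobounded 𝕜) (nhds 1) := by
    simpa using (hinv.const_mul (a - b)).const_add 1
  refine h.congr' ?_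
  filter_upwards [Bornology.eventually_ne_cobounded b] with x hx
  have : b - x ≠ 0 := sub_ne_zero.2 hx.symm
  field_simp
  ring

theorem tendsto_neg_log_sub_div_sub_cobounded (z w : ℂ) :
    Tendsto (fun x => -log ((z - x) / (w - x))) (Bornology.cobounded ℂ) (nhds 0) := by
  simpa using ((tendsto_sub_div_sub_cobounded z w).clog one_mem_slitPlane).neg

theorem integral_inv_sub_ofReal_sub_inv_sub_ofReal {z w : ℂ} (h : 0 < z.im * w.im) :
    ∫ t : ℝ, ((z - t)⁻¹ - (w - t)⁻¹) = 0 := by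
  have hint := integrable_inv_sub_ofReal_sub_inv_sub_ofReal
    (left_ne_zero_of_mul h.ne') (right_ne_zero_of_mul h.ne')
  have hlim := tendsto_neg_log_sub_div_sub_cobounded z w
  rw [integral_of_hasDerivAt_of_tendsto (hasDerivAt_neg_log_sub_ofReal_div h) hint
    (hlim.comp (RCLike.tendsto_ofReal_atBot_cobounded ℂ))
    (hlim.comp (RCLike.tendsto_ofReal_atTop_cobounded ℂ)), sub_zero]

theorem one_add_mul_div_eq_inv_sub_inv_sub {z : ℂ} (hz : z.im ≠ 0) (t : ℝ) :
    (1 + (t : ℂ) * z) / ((z - t) * (1 + (t : ℂ) ^ 2)) =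
      ((z - t)⁻¹ - (I - t)⁻¹) - I * ((1 + t ^ 2)⁻¹ : ℝ) := by
  have hzt := sub_ofReal_ne_zero hz t
  have hsq := one_add_ofReal_sq_ne_zero t
  have inv_I_sub : (I - t : ℂ)⁻¹ = -(I + t) / (1 + (t : ℂ) ^ 2) := by
    refine inv_eq_of_mul_eq_one_right ?_
    field_simp
    linear_combination -I_sq
  rw [inv_I_sub]
  push_cast
  field_simp
  ring

theorem integrable_one_add_mul_div {z : ℂ} (hz : z.im ≠ 0) :
    Integrable fun t : ℝ => (1 + (t : ℂ) * z) / ((z - t) * (1 + (t : ℂ) ^ 2)) := by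
  simp only [one_add_mul_div_eq_inv_sub_inv_sub hz]
  exact (integrable_inv_sub_ofReal_sub_inv_sub_ofReal hz (by simp)).sub
    (integrable_inv_one_add_sq.ofReal.const_mul I)

theorem integral_one_add_mul_div {z : ℂ} (hz : 0 < z.im) :
    ∫ t : ℝ, (1 + (t : ℂ) * z) / ((z - t) * (1 + (t : ℂ) ^ 2)) = -Real.pi * I := by
  have hdiff : Integrable fun t : ℝ => (z - t)⁻¹ - (I - t)⁻¹ :=
    integrable_inv_sub_ofReal_sub_inv_sub_ofReal hz.ne' (by simp)
  have hcauchy : Integrable fun t : ℝ => I * ((1 + t ^ 2)⁻¹ : ℝ) :=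
    integrable_inv_one_add_sq.ofReal.const_mul I
  calc ∫ t : ℝ, (1 + (t : ℂ) * z) / ((z - t) * (1 + (t : ℂ) ^ 2))
    _ = (∫ t : ℝ, ((z - t)⁻¹ - (I - t)⁻¹)) - ∫ t : ℝ, I * ((1 + t ^ 2)⁻¹ : ℝ) := by
      simp only [one_add_mul_div_eq_inv_sub_inv_sub hz.ne', integral_sub hdiff hcauchy]
    _ = 0 - I * Real.pi := by
      rw [integral_inv_sub_ofReal_sub_inv_sub_ofReal (by simpa using hz), integral_const_mul,
        integral_complex_ofReal, integral_univ_inv_one_add_sq]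
    _ = -Real.pi * I := by ring

/-- For `Im z > 0`, the function `t ↦ (1 + tz)/((z − t)(1 + t²))` is
integrable on `ℝ` with `∫ = −πi`; consequently for `c > 0`,
`−(1/(2πi)) ∫ (1 + tz)/((z − t)(1 + t²)) (log c) dt = (1/2) log c`. -/
theorem statement11
    (z : ℂ) (hz : 0 < z.im) :
    Integrable (fun t : ℝ => (1 + (t : ℂ) * z) / ((z - t) * (1 + (t : ℂ) ^ 2))) ∧
    (∫ t : ℝ, (1 + (t : ℂ) * z) / ((z - t) * (1 + (t : ℂ) ^ 2))) = -Real.pi * Complex.I ∧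
    (∀ c : ℝ, 0 < c →
      -(1 / (2 * Real.pi * Complex.I)) *
          ∫ t : ℝ, ((1 + (t : ℂ) * z) / ((z - t) * (1 + (t : ℂ) ^ 2))) * (Real.log c : ℂ)
        = (1 / 2) * (Real.log c : ℂ)) := by
  refine ⟨integrable_one_add_mul_div hz.ne', integral_one_add_mul_div hz, fun c _ => ?_⟩
  rw [integral_mul_const, integral_one_add_mul_div hz]
  have hpi : (Real.pi : ℂ) ≠ 0 := ofReal_ne_zero.2 Real.pi_ne_zero
  have hI : I ≠ 0 := I_ne_zero
  field_simp
end
end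

section
/- Let z ∈ ℂ and let q₁ : [0,∞) → (0,∞) be differentiable with q₁(0) = 1; set q₂(x) = 1/(2 q₁(x)) and B(x) = q₁′(x)/q₁(x). Let H(x) be the 2×2 matrix with rows (q₂(x)², 1/2) and (1/2, q₁(x)²), J the matrix with rows (0,1) and (1,0), j = diag(1,−1), Γ(x) the matrix with rows (0, B(x)) and (B(x), 0), and T(x) the matrix with rows (q₁(x), −q₁(x)) and (q₂(x), q₂(x)). If W : [0,∞) → M₂(ℂ) is differentiable and solves W′(x) = iz J H(x) W(x) with W(0) = I₂, then V(x) = e^{−ixz/2} T(x)^{−1} W(x) T(0) solves V′(x) = (iz/2) j V(x) + Γ(x) V(x) with V(0) = I₂. -/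
open Complex Set Matrix

noncomputable section

/-!
The transformation is a gauge transformation: if `W′ = A W` and `P′ + P A = D P`, then `V = P W M`
solves `V′ = D V` for every constant matrix `M`. Here `P = e^{−ixz/2} T⁻¹`. The rows of `T` scale
like `q₁` and `1/q₁`, so `(T⁻¹)′ = Γ T⁻¹`. The matrix `J H` is a rank-one projection, which `T`
diagonalises: `T⁻¹ J H = ((1 + j)/2) T⁻¹`. The scalar exponential removes the trace part `iz/2`
of `iz (1 + j)/2`, which leaves `D = (iz/2) j + Γ`.
-/

section EntrywiseDerivative

variable {𝕜 𝔸 l m n : Type*} [NontriviallyNormedField 𝕜] [NormedRing 𝔸] [NormedAlgebra 𝕜 𝔸]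
  {s : Set 𝕜} {x : 𝕜}

/-- The matrix `M'` is the entrywise derivative of `M` at `x` within `s`. Working entry by entry
avoids a choice of norm on matrices. -/
def HasEntrywiseDerivWithinAt (M : 𝕜 → Matrix m n 𝔸) (M' : Matrix m n 𝔸) (s : Set 𝕜) (x : 𝕜) :
    Prop :=
  ∀ i k, HasDerivWithinAt (fun t => M t i k) (M' i k) s x

namespace HasEntrywiseDerivWithinAt

theorem const (M : Matrix m n 𝔸) : HasEntrywiseDerivWithinAt (fun _ => M) 0 s x :=
  fun i k => hasDerivWithinAt_const x s (M i k)

theorem smul {c : 𝕜 → 𝔸} {c' : 𝔸} {M : 𝕜 → Matrix m n 𝔸} {M' : Matrix m n 𝔸}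
    (hc : HasDerivWithinAt c c' s x) (hM : HasEntrywiseDerivWithinAt M M' s x) :
    HasEntrywiseDerivWithinAt (fun t => c t • M t) (c' • M x + c x • M') s x :=
  fun i k => hc.fun_mul (hM i k)

variable [Fintype m]

theorem mul {M : 𝕜 → Matrix l m 𝔸} {M' : Matrix l m 𝔸} {N : 𝕜 → Matrix m n 𝔸}
    {N' : Matrix m n 𝔸} (hM : HasEntrywiseDerivWithinAt M M' s x)
    (hN : HasEntrywiseDerivWithinAt N N' s x) :
    HasEntrywiseDerivWithinAt (fun t => M t * N t) (M' * N x + M x * N') s x := fun i k => by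
  simpa only [Matrix.add_apply, Matrix.mul_apply, Finset.sum_add_distrib] using
    HasDerivWithinAt.fun_sum fun p (_ : p ∈ Finset.univ) => (hM i p).fun_mul (hN p k)

theorem mul_const {M : 𝕜 → Matrix l m 𝔸} {M' : Matrix l m 𝔸}
    (hM : HasEntrywiseDerivWithinAt M M' s x) (N : Matrix m n 𝔸) :
    HasEntrywiseDerivWithinAt (fun t => M t * N) (M' * N) s x := by
  simpa only [Matrix.mul_zero, add_zero] using hM.mul (const N)

theorem gauge_mul [Fintype l] {P : 𝕜 → Matrix l m 𝔸} {P' : Matrix l m 𝔸} {W : 𝕜 → Matrix m n 𝔸}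
    {A : Matrix m m 𝔸} {D : Matrix l l 𝔸} (hP : HasEntrywiseDerivWithinAt P P' s x)
    (hW : HasEntrywiseDerivWithinAt W (A * W x) s x) (hPA : P' + P x * A = D * P x) :
    HasEntrywiseDerivWithinAt (fun t => P t * W t) (D * (P x * W x)) s x := by
  simpa only [← Matrix.mul_assoc, ← Matrix.add_mul, hPA] using hP.mul hW

end HasEntrywiseDerivWithinAt

end EntrywiseDerivative

section DiracGauge

variable {K : Type*} [Field K]

/-- The Hamiltonian `H` of the canonical system, as a function of the value `a` of `q₁`. -/
def canonicalHamiltonian (a : K) : Matrix (Fin 2) (Fin 2) K :=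
  !![(1 / (2 * a)) ^ 2, 1 / 2; 1 / 2, a ^ 2]

/-- The matrix `T` relating the canonical system to the Dirac system, as a function of the value
`a` of `q₁`. -/
def diracGauge (a : K) : Matrix (Fin 2) (Fin 2) K :=
  !![a, -a; 1 / (2 * a), 1 / (2 * a)]

/-- The potential `Γ` of the Dirac system, as a function of the value `b` of `B`. -/
def diracPotential (b : K) : Matrix (Fin 2) (Fin 2) K :=
  !![0, b; b, 0]

variable [NeZero (2 : K)] {a : K}

theorem det_diracGauge (ha : a ≠ 0) : (diracGauge a).det = 1 := by
  have h2 : (2 : K) ≠ 0 := two_ne_zero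
  rw [diracGauge, Matrix.det_fin_two_of]
  field_simp
  norm_num

-- At `a = 0` both sides are zero, since `1 / 0 = 0` and the inverse of a singular matrix is `0`.
theorem inv_diracGauge (a : K) :
    (diracGauge a)⁻¹ = !![1 / (2 * a), a; -(1 / (2 * a)), a] := by
  rcases eq_or_ne a 0 with rfl | ha
  · simp [diracGauge, Matrix.inv_def, ← Matrix.ext_iff, Fin.forall_fin_two]
  · rw [Matrix.inv_def, det_diracGauge ha, Ring.inverse_one, one_smul, diracGauge,
      Matrix.adjugate_fin_two_of, neg_neg]

theorem inv_diracGauge_mul_canonicalHamiltonian (ha : a ≠ 0) :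
    (diracGauge a)⁻¹ * (!![0, 1; 1, 0] * canonicalHamiltonian a) =
      (1 / 2 : K) • ((1 + !![1, 0; 0, -1]) * (diracGauge a)⁻¹) := by
  have h2 : (2 : K) ≠ 0 := two_ne_zero
  rw [inv_diracGauge, canonicalHamiltonian, Matrix.one_fin_two]
  ext i k
  fin_cases i <;> fin_cases k <;> simp [field]

theorem smul_inv_diracGauge_intertwines (ha : a ≠ 0) (w b c : K) :
    (-(w / 2) * c) • (diracGauge a)⁻¹ + c • (diracPotential b * (diracGauge a)⁻¹) +
        (c • (diracGauge a)⁻¹) * (w • (!![0, 1; 1, 0] * canonicalHamiltonian a)) =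
      ((w / 2) • !![1, 0; 0, -1] + diracPotential b) * (c • (diracGauge a)⁻¹) := by
  rw [Matrix.smul_mul, Matrix.mul_smul, inv_diracGauge_mul_canonicalHamiltonian ha]
  simp only [Matrix.add_mul, Matrix.one_mul, Matrix.smul_mul, Matrix.mul_smul]
  module

end DiracGauge

section DiracTransform

variable {s : Set ℝ} {x : ℝ} {q : ℝ → ℂ}

theorem hasEntrywiseDerivWithinAt_inv_diracGauge {q' : ℂ} (hqx : q x ≠ 0)
    (hq : HasDerivWithinAt q q' s x) :
    HasEntrywiseDerivWithinAt (fun t => (diracGauge (q t))⁻¹)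
      (diracPotential (q' / q x) * (diracGauge (q x))⁻¹) s x := by
  have h_inv : HasDerivWithinAt (fun t => 1 / (2 * q t)) (-(q' / q x * (1 / (2 * q x)))) s x := by
    simp only [one_div]
    refine ((hq.const_mul 2).fun_inv (mul_ne_zero two_ne_zero hqx)).congr_deriv ?_
    field_simp
  have h_self : HasDerivWithinAt q (q' / q x * q x) s x := by
    rwa [div_mul_cancel₀ q' hqx]
  simp only [inv_diracGauge, diracPotential]
  intro i k
  fin_cases i <;> fin_cases k
  · simpa using h_inv
  · simpa using h_self
  · simpa using h_inv.fun_neg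
  · simpa using h_self

theorem hasDerivWithinAt_exp_neg_I_mul (z : ℂ) (s : Set ℝ) (x : ℝ) :
    HasDerivWithinAt (fun t : ℝ => exp (-(I * t * z) / 2))
      (-(I * z / 2) * exp (-(I * x * z) / 2)) s x := by
  have h_id : HasDerivAt (fun t : ℝ => (t : ℂ)) 1 x := Complex.ofRealCLM.hasDerivAt
  have h_exponent := ((h_id.const_mul I).mul_const z).fun_neg.div_const 2
  exact h_exponent.cexp.hasDerivWithinAt.congr_deriv (by ring)

/-- The solution `V` of the Dirac system obtained from the solution `W` of
the canonical system, with `q` in the role of `q₁`. -/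
def diracTransform (z : ℂ) (q : ℝ → ℂ) (W : ℝ → Matrix (Fin 2) (Fin 2) ℂ) (x : ℝ) :
    Matrix (Fin 2) (Fin 2) ℂ :=
  exp (-(I * x * z) / 2) • ((diracGauge (q x))⁻¹ * W x * diracGauge (q 0))

theorem diracTransform_zero (z : ℂ) (hq : q 0 ≠ 0) {W : ℝ → Matrix (Fin 2) (Fin 2) ℂ}
    (hW : W 0 = 1) : diracTransform z q W 0 = 1 := by
  have h_unit : IsUnit (diracGauge (q 0)).det := by simp [det_diracGauge hq]
  simp [diracTransform, hW, Matrix.nonsing_inv_mul _ h_unit]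

theorem hasEntrywiseDerivWithinAt_diracTransform (z : ℂ) {q' : ℂ} (hqx : q x ≠ 0)
    (hq : HasDerivWithinAt q q' s x) {W : ℝ → Matrix (Fin 2) (Fin 2) ℂ}
    (hW : HasEntrywiseDerivWithinAt W
      ((I * z) • (!![0, 1; 1, 0] * canonicalHamiltonian (q x) * W x)) s x) :
    HasEntrywiseDerivWithinAt (diracTransform z q W)
      ((I * z / 2) • (!![1, 0; 0, -1] * diracTransform z q W x) +
        diracPotential (q' / q x) * diracTransform z q W x) s x := by
  have hP := (hasEntrywiseDerivWithinAt_inv_diracGauge hqx hq).smul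
    (hasDerivWithinAt_exp_neg_I_mul z s x)
  rw [← Matrix.smul_mul] at hW
  have hPW := hP.gauge_mul hW (smul_inv_diracGauge_intertwines hqx _ _ _)
  have hV := hPW.mul_const (diracGauge (q 0))
  unfold diracTransform
  simpa only [Matrix.smul_mul, Matrix.add_mul, Matrix.mul_assoc] using hV

theorem statement19_general (z : ℂ) {q' : ℝ → ℂ} (h0 : (0 : ℝ) ∈ s) (hq_ne : ∀ x ∈ s, q x ≠ 0)
    (hq : ∀ x ∈ s, HasDerivWithinAt q (q' x) s x) {W : ℝ → Matrix (Fin 2) (Fin 2) ℂ}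
    (hW : ∀ x ∈ s, HasEntrywiseDerivWithinAt W
      ((I * z) • (!![0, 1; 1, 0] * canonicalHamiltonian (q x) * W x)) s x)
    (hW0 : W 0 = 1) :
    (∀ x ∈ s, HasEntrywiseDerivWithinAt (diracTransform z q W)
      ((I * z / 2) • (!![1, 0; 0, -1] * diracTransform z q W x) +
        diracPotential (q' x / q x) * diracTransform z q W x) s x) ∧
    diracTransform z q W 0 = 1 :=
  ⟨fun x hx => hasEntrywiseDerivWithinAt_diracTransform z (hq_ne x hx) (hq x hx) (hW x hx),
    diracTransform_zero z (hq_ne 0 h0) hW0⟩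

end DiracTransform

/-- If `W` solves `W′ = iz J H(x) W`, `W(0) = I₂`, with
`H(x) = !![q₂², 1/2; 1/2, q₁²]`, `J = !![0,1;1,0]`, then
`V(x) = e^{−ixz/2} T(x)⁻¹ W(x) T(0)` solves `V′ = (iz/2) j V + Γ(x) V`, `V(0) = I₂`, where
`j = diag(1,−1)`, `Γ(x) = !![0, B; B, 0]`, `B = q₁′/q₁`, `q₂ = 1/(2q₁)`, and
`T(x) = !![q₁, −q₁; q₂, q₂]`. -/
theorem statement19
    (z : ℂ) (q₁ q₁' : ℝ → ℝ)
    (hq₁_pos : ∀ x : ℝ, 0 ≤ x → 0 < q₁ x)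
    (hq₁0 : q₁ 0 = 1)
    (hq₁_deriv : ∀ x : ℝ, 0 ≤ x → HasDerivWithinAt q₁ (q₁' x) (Ici (0 : ℝ)) x)
    (q₂ : ℝ → ℝ) (hq₂ : ∀ x : ℝ, q₂ x = 1 / (2 * q₁ x))
    (B : ℝ → ℝ) (hB : ∀ x : ℝ, B x = q₁' x / q₁ x)
    (H : ℝ → Matrix (Fin 2) (Fin 2) ℂ)
    (hH : ∀ x : ℝ, H x = !![((q₂ x : ℂ)) ^ 2, 1 / 2; 1 / 2, ((q₁ x : ℂ)) ^ 2])
    (J : Matrix (Fin 2) (Fin 2) ℂ) (hJ : J = !![0, 1; 1, 0])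
    (j : Matrix (Fin 2) (Fin 2) ℂ) (hj : j = !![1, 0; 0, -1])
    (Γ : ℝ → Matrix (Fin 2) (Fin 2) ℂ)
    (hΓ : ∀ x : ℝ, Γ x = !![0, (B x : ℂ); (B x : ℂ), 0])
    (T : ℝ → Matrix (Fin 2) (Fin 2) ℂ)
    (hT : ∀ x : ℝ, T x = !![(q₁ x : ℂ), -(q₁ x : ℂ); (q₂ x : ℂ), (q₂ x : ℂ)])
    (W : ℝ → Matrix (Fin 2) (Fin 2) ℂ)
    (hW_deriv : ∀ x : ℝ, 0 ≤ x → ∀ i k : Fin 2,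
      HasDerivWithinAt (fun t => W t i k)
        (((Complex.I * z) • (J * H x * W x)) i k) (Ici (0 : ℝ)) x)
    (hW0 : W 0 = 1)
    (V : ℝ → Matrix (Fin 2) (Fin 2) ℂ)
    (hV : ∀ x : ℝ, V x = Complex.exp (-(Complex.I * x * z) / 2) • ((T x)⁻¹ * W x * T 0)) :
    (∀ x : ℝ, 0 ≤ x → ∀ i k : Fin 2,
      HasDerivWithinAt (fun t => V t i k)
        ((((Complex.I * z / 2) • (j * V x)) + Γ x * V x) i k) (Ici (0 : ℝ)) x) ∧
    V 0 = 1 := by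
  obtain rfl : V = diracTransform z (fun x => q₁ x) W := funext fun x => by
    simp [hV, hT, hq₂, diracTransform, diracGauge]
  have hH' (x : ℝ) : H x = canonicalHamiltonian (q₁ x : ℂ) := by
    simp [hH, hq₂, canonicalHamiltonian]
  have hΓ' (x : ℝ) : Γ x = diracPotential (q₁' x / q₁ x : ℂ) := by
    simp [hΓ, hB, diracPotential]
  simp only [hH', hJ, hΓ', hj] at hW_deriv ⊢
  exact statement19_general z self_mem_Ici (fun x hx => ofReal_ne_zero.2 (hq₁_pos x hx).ne')
    (fun x hx => (hq₁_deriv x hx).ofReal_comp) hW_deriv hW0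
end
end
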